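/- arXiv:1304.6843 — 2 statements merged into one kernel-verified Lean document; each statement's English description precedes it below -/
import Mathlib

section
/- Let G = G₁ × ⋯ × G_n be a product of n ≥ 1 infinite groups of type FP∞. Then H^p(G, ℤ[G]) = 0 for all p ≤ n - 1. -/
open CategoryTheory

/-- A group `G` is of type `FP∞` over `ℤ`: the trivial module `ℤ` admits a projective
resolution by `ℤ[G]`-modules which are finitely generated in every degree. -/
def IsFPInfinity (G : Type) [Group G] : Prop :=
  ∃ P : ProjectiveResolution (Rep.trivial ℤ G ℤ),
    ∀ i : ℕ, Module.Finite (MonoidAlgebra ℤ G)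
      ((Rep.equivalenceModuleMonoidAlgebra.functor.obj (P.complex.X i)) :
        ModuleCat (MonoidAlgebra ℤ G))

/-!
By induction on the number of factors, `Hᵖ(G, k[G] ⊗ A)` vanishes for all `p < n` and every
`k`-module `A`. Let `G = N × K`, where `N` is the product of `n` factors and `K` is one more.
Restricted to `N`, the representation `M = k[G] ⊗ A` is `k[N] ⊗ (k[K] ⊗ A)`, whose cohomology
vanishes below degree `n`. By the lowest part of the Hochschild–Serre spectral sequence, so does
that of `G` in `M`, and `Hⁿ(G, M)` embeds into `Hⁿ(G, coind_N^G M) ≅ Hⁿ(N, k[N] ⊗ (k[K] ⊗ A))`.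

Elements `s` of `K` act trivially on the image of this embedding. On the other hand, let a finite
set `S` generate an infinite subgroup of `K`. A finitely supported function invariant under `S` is
zero, so the `s - 1` embed `k[K] ⊗ A` into a finite power of itself, and this embedding remains
injective after applying `Hⁿ(N, k[N] ⊗ -)` because lower cohomology vanishes.
Hence `Hⁿ(G, M) = 0`. Finiteness of `S` is what lets cohomology commute with the power.

A group of type `FP∞` has a finitely generated augmentation ideal, hence is finitely generated.
-/

universe u

section Vanishing

open Limits groupCohomology

variable {k G : Type u} [CommRing k] [Group G]

instance groupCohomology_functor_additive (n : ℕ) : (functor k G n).Additive :=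
  inferInstanceAs (cochainsFunctor k G ⋙ HomologicalComplex.homologyFunctor _ _ n).Additive

lemma isZero_groupCohomology_iff (M : Rep k G) (n : ℕ) :
    IsZero (groupCohomology M n) ↔
      ∀ x : (inhomogeneousCochains M).X n, (inhomogeneousCochains M).d n (n + 1) x = 0 →
        ∃ y : (inhomogeneousCochains M).X ((ComplexShape.up ℕ).prev n),
          (inhomogeneousCochains M).d _ n y = x := by
  rw [groupCohomology, ← HomologicalComplex.exactAt_iff_isZero_homology,
    HomologicalComplex.exactAt_iff' _ _ n (n + 1) rfl (by simp), ShortComplex.moduleCat_exact_iff]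
  rfl

/-- The representation `M` of `G` satisfies `Hᵖ(G, M) = 0` for all `p < n`. -/
def CohomologyVanishesBelow (n : ℕ) (M : Rep k G) : Prop :=
  ∀ p < n, IsZero ((functor k G p).obj M)

namespace CohomologyVanishesBelow

variable {n : ℕ}

lemma of_retract {M P : Rep k G} (r : Retract M P) (h : CohomologyVanishesBelow n P) :
    CohomologyVanishesBelow n M := fun p hp =>
  (h p hp).of_mono (r.map (functor k G p)).i

lemma of_iso {M P : Rep k G} (e : M ≅ P) (h : CohomologyVanishesBelow n P) :
    CohomologyVanishesBelow n M :=
  h.of_retract e.retract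

lemma coind {N : Subgroup G} {P : Rep k N} (h : CohomologyVanishesBelow n P) :
    CohomologyVanishesBelow n (Rep.coind N.subtype P) := fun p hp =>
  (h p hp).of_iso (coindIso P p)

lemma mono_functor_map_f {X : ShortComplex (Rep k G)} (hX : X.ShortExact)
    (h : CohomologyVanishesBelow n X.X₃) : Mono ((functor k G n).map X.f) := by
  cases n with
  | zero =>
    have := hX.mono_f
    exact mono_map_0_of_mono X.f
  | succ n => exact (mapShortComplex₁_exact hX rfl).mono_g ((h n n.lt_succ_self).eq_of_src _ _)

-- A family of morphisms that identifies `Q` with a power of `P` also identifies the cochains.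
lemma of_jointly_bijective {ι : Type*} {Q P : Rep k G} (e : ι → (Q ⟶ P))
    (he : Function.Bijective fun (q : Q) i => (e i).hom q) (h : CohomologyVanishesBelow n P) :
    CohomologyVanishesBelow n Q := by
  intro p hp
  replace h := (isZero_groupCohomology_iff P p).1 (h p hp)
  refine (isZero_groupCohomology_iff Q p).2 fun x hx => ?_
  let f (i : ι) := cochainsMap (MonoidHom.id G) (e i)
  have comm (i : ι) (a b : ℕ) (x : (inhomogeneousCochains Q).X a) :
      (inhomogeneousCochains P).d a b ((f i).f a x) =
        (f i).f b ((inhomogeneousCochains Q).d a b x) :=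
    congr($((f i).comm a b) x)
  choose y hy using fun i => h ((f i).f p x) (by rw [comm, hx, map_zero])
  choose z hz using fun g => he.2 fun i => y i g
  refine ⟨z, funext fun g => he.1 (funext fun i => ?_)⟩
  have hzy : (f i).f _ z = y i := funext fun g => congr_fun (hz g) i
  exact congr_fun ((comm i _ p z).symm.trans (hzy ▸ hy i)) g

end CohomologyVanishesBelow

end Vanishing

section Coinduction

open Limits groupCohomology

variable {k G : Type u} [CommRing k] [Group G]

instance coindFunctor_additive (N : Subgroup G) : (Rep.coindFunctor.{u} k N.subtype).Additive :=
  ⟨rfl⟩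

instance coindFunctor_preservesFiniteColimits (N : Subgroup G) :
    PreservesFiniteColimits (Rep.coindFunctor.{u} k N.subtype) :=
  have := (Rep.coindFunctor.{u} k N.subtype).preservesHomology_of_preservesEpis_and_kernels
  (Rep.coindFunctor.{u} k N.subtype).preservesFiniteColimits_of_preservesHomology

/-- The functor `M ↦ coind_N^G (res_N M)`. -/
noncomputable abbrev coindResFunctor (k : Type u) [CommRing k] (N : Subgroup G) :
    Rep.{u} k G ⥤ Rep.{u} k G :=
  Rep.resFunctor N.subtype ⋙ Rep.coindFunctor k N.subtype

/-- The natural morphism `M ⟶ coind_N^G (res_N M)` sending `m` to the function `g ↦ g • m`. -/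
noncomputable abbrev toCoindRes (k : Type u) [CommRing k] (N : Subgroup G) :
    𝟭 (Rep.{u} k G) ⟶ coindResFunctor k N :=
  (Rep.resCoindAdjunction k N.subtype).unit

/-- Evaluation of a coinduced function at `g`, followed by `g⁻¹`; this is `N`-linear
because `N` is normal. -/
noncomputable def coindEval (N : Subgroup G) [N.Normal] (M : Rep.{u} k G) (g : G) :
    Rep.res N.subtype (Rep.coind N.subtype (Rep.res N.subtype M)) ⟶ Rep.res N.subtype M :=
  Rep.ofHom ⟨M.ρ g⁻¹ ∘ₗ LinearMap.proj g ∘ₗ Submodule.subtype _, fun n => by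
    ext φ
    have hφ := φ.2 ⟨g * n * g⁻¹, ‹N.Normal›.conj_mem n n.2 g⟩ g
    change M.ρ g⁻¹ (φ.1 (g * n)) = M.ρ n (M.ρ g⁻¹ (φ.1 g))
    rw [Subgroup.subtype_apply, inv_mul_cancel_right] at hφ
    rw [hφ]
    change M.ρ g⁻¹ (M.ρ (g * n * g⁻¹) (φ.1 g)) = _
    simp only [← Module.End.mul_apply, ← map_mul, mul_assoc, inv_mul_cancel_left]⟩

lemma apply_eq_ρ_coindEval (N : Subgroup G) [N.Normal] (M : Rep.{u} k G) (g : G)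
    (φ : Rep.coind N.subtype (Rep.res N.subtype M)) :
    φ.1 g = M.ρ g ((coindEval N M g).hom φ) :=
  (M.ρ.self_inv_apply g _).symm

lemma coindEval_eq_of_mk_eq (N : Subgroup G) [N.Normal] (M : Rep.{u} k G) {g h : G}
    (hgh : (g : G ⧸ N) = h) : coindEval N M g = coindEval N M h := by
  ext φ
  have hφ : φ.1 h = M.ρ (h / g) (φ.1 g) := by
    simpa using φ.2 ⟨h / g, QuotientGroup.eq_iff_div_mem.1 hgh.symm⟩ g
  change M.ρ g⁻¹ (φ.1 g) = M.ρ h⁻¹ (φ.1 h)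
  rw [hφ, ← Module.End.mul_apply, ← map_mul, div_eq_mul_inv, inv_mul_cancel_left]

lemma coindEval_out_bijective (N : Subgroup G) [N.Normal] (M : Rep.{u} k G) :
    Function.Bijective fun (φ : Rep.coind N.subtype (Rep.res N.subtype M)) (q : G ⧸ N) =>
      (coindEval N M q.out).hom φ := by
  refine ⟨fun φ ψ h => Subtype.ext (funext fun g => ?_), fun f => ?_⟩
  · have hg := congr_fun h (g : G ⧸ N)
    simp only [coindEval_eq_of_mk_eq N M (g : G ⧸ N).out_eq'] at hg
    rw [apply_eq_ρ_coindEval, hg, ← apply_eq_ρ_coindEval]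
  · refine ⟨⟨fun g => M.ρ g (f g), fun n g => ?_⟩, funext fun q => ?_⟩
    · have hng : ((n * g : G) : G ⧸ N) = g := by simp
      change M.ρ (n * g) (f (n * g : G)) = M.ρ n (M.ρ g (f g))
      rw [hng, map_mul, Module.End.mul_apply]
    · exact (M.ρ.inv_self_apply q.out _).trans (congr_arg f q.out_eq')

lemma toCoindRes_app_comp_coindEval (N : Subgroup G) [N.Normal] (M : Rep.{u} k G) (g : G) :
    (Rep.resFunctor N.subtype).map ((toCoindRes k N).app M) ≫ coindEval N M g = 𝟙 _ := by
  ext m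
  exact M.ρ.inv_self_apply g m

/-- The short exact sequence `0 ⟶ M ⟶ coind_N^G (res_N M) ⟶ C ⟶ 0`. -/
noncomputable abbrev coindResSequence (N : Subgroup G) (M : Rep.{u} k G) :
    ShortComplex (Rep.{u} k G) :=
  ShortComplex.mk _ _ (cokernel.condition ((toCoindRes k N).app M))

lemma coindResSequence_shortExact (N : Subgroup G) (M : Rep.{u} k G) :
    (coindResSequence N M).ShortExact :=
  .mk' (ShortComplex.exact_cokernel _) inferInstance inferInstance

lemma epi_δ_coindResSequence_bot (M : Rep.{u} k G) (n : ℕ) :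
    Epi (groupCohomology.δ (coindResSequence_shortExact (⊥ : Subgroup G) M) n (n + 1) rfl) :=
  epi_δ_of_isZero _ n <| .of_iso (isZero_groupCohomology_succ_of_subsingleton _ n) <|
    coindIso (Rep.res (⊥ : Subgroup G).subtype M) (n + 1)

/- Dimension shifting: `coind_1^G (res_1 M)` is acyclic, so degree `n + 1` is a quotient of
degree `n` for another representation. -/
theorem functor_map_eq_of_eqOn_invariants {F : Rep.{u} k G ⥤ Rep.{u} k G}
    [F.PreservesZeroMorphisms] [PreservesFiniteLimits F] [PreservesFiniteColimits F]
    {α β : 𝟭 _ ⟶ F}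
    (h : ∀ (M : Rep.{u} k G), ∀ m ∈ M.ρ.invariants, (α.app M).hom m = (β.app M).hom m)
    (n : ℕ) (M : Rep.{u} k G) :
    (functor k G n).map (α.app M) = (functor k G n).map (β.app M) := by
  induction n generalizing M with
  | zero =>
    refine (cancel_mono (H0Iso _).hom).1 ?_
    refine (map_id_comp_H0Iso_hom _).trans (.trans ?_ (map_id_comp_H0Iso_hom _).symm)
    congr 1
    ext m
    exact Subtype.ext (h M _ m.2)
  | succ n ih =>
    have hX := coindResSequence_shortExact (⊥ : Subgroup G) M
    have hFX := hX.map_of_exact F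
    have := epi_δ_coindResSequence_bot M n
    refine (cancel_epi (groupCohomology.δ hX n (n + 1) rfl)).1 ?_
    have naturality (γ : 𝟭 _ ⟶ F) := groupCohomology.δ_naturality hX hFX
      ((coindResSequence (⊥ : Subgroup G) M).mapNatTrans γ) n (n + 1) rfl
    exact (naturality α).trans (.trans (congr_arg (· ≫ _) (ih _)) (naturality β).symm)

end Coinduction

section HochschildSerre

open Limits groupCohomology

variable {k G : Type u} [CommRing k] [Group G] (N : Subgroup G) [N.Normal]

namespace CohomologyVanishesBelow

variable {n : ℕ} {M : Rep.{u} k G}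

lemma res_coindResSequence_X₃ (h : CohomologyVanishesBelow n (Rep.res N.subtype M)) :
    CohomologyVanishesBelow n (Rep.res N.subtype (coindResSequence N M).X₃) := by
  have hX := (Rep.shortExact_res N.subtype).2 (coindResSequence_shortExact N M)
  have splitting := ShortComplex.Splitting.ofExactOfRetraction _ hX.exact (coindEval N M 1)
    (toCoindRes_app_comp_coindEval N M 1) hX.epi_g
  have h₂ : CohomologyVanishesBelow n (Rep.res N.subtype (coindResSequence N M).X₂) :=
    h.of_jointly_bijective _ (coindEval_out_bijective N M)
  exact h₂.of_retract ⟨splitting.s, _, splitting.s_g⟩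

-- The lowest-degree part of the Hochschild–Serre spectral sequence.
theorem of_res (h : CohomologyVanishesBelow n (Rep.res N.subtype M)) :
    CohomologyVanishesBelow n M := by
  intro p hp
  induction p using Nat.strong_induction_on generalizing M with
  | _ p ih =>
    have := mono_functor_map_f (coindResSequence_shortExact N M) (n := p) fun i hi =>
      ih i hi (h.res_coindResSequence_X₃ N) (hi.trans hp)
    exact (h.coind p hp).of_mono ((functor k G p).map (coindResSequence N M).f)

theorem mono_functor_map_toCoindRes (h : CohomologyVanishesBelow n (Rep.res N.subtype M)) :
    Mono ((functor k G n).map ((toCoindRes k N).app M)) :=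
  mono_functor_map_f (coindResSequence_shortExact N M) (h.res_coindResSequence_X₃ N).of_res

theorem mono_functor_map_homEquiv (h : CohomologyVanishesBelow n (Rep.res N.subtype M))
    {P : Rep.{u} k N} (e : (Rep.resFunctor N.subtype).obj M ≅ P) :
    Mono ((functor k G n).map ((Rep.resCoindAdjunction k N.subtype).homEquiv M P e.hom)) := by
  have := h.mono_functor_map_toCoindRes N
  rw [Adjunction.homEquiv_unit, Functor.map_comp]
  infer_instance

end CohomologyVanishesBelow

end HochschildSerre

section CentralizerAction

open groupCohomology

variable {k G : Type u} [CommRing k] [Group G]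

/-- An element `s` of the centralizer of `N` acts on the restriction to `N` of every
representation of `G`, naturally in the representation. -/
noncomputable def resAction (k : Type u) [CommRing k] {N : Subgroup G} {s : G}
    (hs : s ∈ Subgroup.centralizer N) :
    Rep.resFunctor (k := k) N.subtype ⟶ Rep.resFunctor N.subtype where
  app M := Rep.ofHom ⟨M.ρ s, fun n => by
    change M.ρ s * M.ρ n = M.ρ n * M.ρ s
    rw [← map_mul, ← map_mul, Subgroup.mem_centralizer_iff.1 hs n n.2]⟩
  naturality M P f := by
    ext m
    exact (Rep.hom_comm_apply f s m).symm

lemma toCoindRes_comp_coind_resAction_apply {N : Subgroup G} {s : G}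
    (hs : s ∈ Subgroup.centralizer N) (M : Rep.{u} k G) {m : M} (hm : m ∈ M.ρ.invariants) :
    ((toCoindRes k N).app M ≫ (Rep.coindFunctor k N.subtype).map ((resAction k hs).app M)).hom m =
      ((toCoindRes k N).app M).hom m := by
  refine Subtype.ext (funext fun g => ?_)
  change M.ρ s (M.ρ g m) = M.ρ g m
  rw [hm g, hm s]

theorem functor_map_toCoindRes_comp_coind_resAction {N : Subgroup G} {s : G}
    (hs : s ∈ Subgroup.centralizer N) (n : ℕ) (M : Rep.{u} k G) :
    (functor k G n).map ((toCoindRes k N).app M ≫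
        (Rep.coindFunctor k N.subtype).map ((resAction k hs).app M)) =
      (functor k G n).map ((toCoindRes k N).app M) :=
  functor_map_eq_of_eqOn_invariants
    (α := toCoindRes k N ≫ Functor.whiskerRight (resAction k hs) (Rep.coindFunctor k N.subtype))
    (β := toCoindRes k N)
    (fun M _ hm => toCoindRes_comp_coind_resAction_apply hs M hm) n M

lemma functor_map_homEquiv_comp_of_resAction_comp_eq {N : Subgroup G} {s : G}
    (hs : s ∈ Subgroup.centralizer N) {M : Rep.{u} k G} {P : Rep.{u} k N}
    {e : (Rep.resFunctor N.subtype).obj M ⟶ P} {t : P ⟶ P}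
    (het : (resAction k hs).app M ≫ e = e ≫ t) (n : ℕ) :
    (functor k G n).map ((Rep.resCoindAdjunction k N.subtype).homEquiv M P e) ≫
        (functor k G n).map ((Rep.coindFunctor k N.subtype).map t) =
      (functor k G n).map ((Rep.resCoindAdjunction k N.subtype).homEquiv M P e) := by
  rw [← Functor.map_comp, ← Adjunction.homEquiv_naturality_right, ← het, Adjunction.homEquiv_unit,
    Adjunction.homEquiv_unit, Functor.map_comp (Rep.coindFunctor k _), ← Category.assoc,
    Functor.map_comp, functor_map_toCoindRes_comp_coind_resAction,
    ← Functor.map_comp]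

end CentralizerAction

section RegularRepresentation

open Limits

variable (k G : Type u) [CommRing k] [Group G]

/-- The representation of `G` on the finitely supported functions `G →₀ A` by left translation,
that is, on `k[G] ⊗ A`. -/
noncomputable def translation (A : Type*) [AddCommGroup A] [Module k A] :
    Representation k G (G →₀ A) where
  toFun g := (Finsupp.domLCongr (Equiv.mulLeft g)).toLinearMap
  map_one' := by
    ext
    simp
  map_mul' g h := by
    ext
    simp

variable {k G} in
lemma translation_apply {A : Type*} [AddCommGroup A] [Module k A] (g h : G) (f : G →₀ A) :
    translation k G A g f h = f (g⁻¹ * h) := by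
  simp [translation]

/-- The functor `A ↦ k[G] ⊗ A` from `k`-modules to representations of `G`. -/
noncomputable def regularFunctor : ModuleCat.{u} k ⥤ Rep.{u} k G where
  obj A := Rep.of (translation k G A)
  map f := Rep.ofHom ⟨Finsupp.mapRange.linearMap f.hom, fun g => by
    ext
    simp [translation]⟩
  map_id A := by
    ext
    simp
  map_comp f g := by
    ext
    simp

instance regularFunctor_additive : (regularFunctor k G).Additive where
  map_add := Rep.hom_ext (DFunLike.ext _ _ fun _ => Finsupp.ext fun _ => rfl)

lemma regularFunctor_map_shortExact {X : ShortComplex (ModuleCat.{u} k)} (hX : X.ShortExact) :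
    (X.map (regularFunctor k G)).ShortExact where
  exact := by
    rw [← ShortComplex.exact_map_iff_of_faithful _ (forget₂ (Rep k G) (ModuleCat k)),
      ShortComplex.moduleCat_exact_iff_range_eq_ker]
    change (Finsupp.mapRange.linearMap (α := G) X.f.hom).range =
      (Finsupp.mapRange.linearMap (α := G) X.g.hom).ker
    have hf := (ModuleCat.mono_iff_ker_eq_bot X.f).1 hX.mono_f
    rw [Finsupp.range_mapRange_linearMap _ hf, Finsupp.ker_mapRange,
      hX.exact.moduleCat_range_eq_ker]
  mono_f := (Rep.mono_iff_injective _).2 <|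
    Finsupp.mapRange_injective _ (map_zero X.f.hom) hX.moduleCat_injective_f
  epi_g := (Rep.epi_iff_surjective _).2 <|
    Finsupp.mapRange_surjective _ (map_zero X.g.hom) hX.moduleCat_surjective_g

end RegularRepresentation

section RegularVanishing

open Limits groupCohomology

variable {k G : Type u} [CommRing k] [Group G]

/-- `Hᵖ(G, k[G] ⊗ A) = 0` for all `k`-modules `A` and all `p < n`. -/
def RegularVanishing (k G : Type u) [CommRing k] [Group G] (n : ℕ) : Prop :=
  ∀ A : ModuleCat.{u} k, CohomologyVanishesBelow n ((regularFunctor k G).obj A)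

lemma RegularVanishing.mono_functor_map_coind {N : Subgroup G} {n : ℕ}
    (h : RegularVanishing k N n) {A B : ModuleCat.{u} k} (f : A ⟶ B) [Mono f] :
    Mono ((functor k G n).map ((Rep.coindFunctor k N.subtype).map ((regularFunctor k N).map f))) :=
  have hf : (ShortComplex.mk f _ (cokernel.condition f)).ShortExact :=
    .mk' (ShortComplex.exact_cokernel f) inferInstance inferInstance
  CohomologyVanishesBelow.mono_functor_map_f
    ((regularFunctor_map_shortExact k N hf).map_of_exact (Rep.coindFunctor k N.subtype))
    (h _).coind

lemma comp_map_biproduct_lift_eq_zero {C D J : Type*} [Category* C] [Category* D] [Preadditive C]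
    [Preadditive D] [HasFiniteBiproducts C] [Finite J] {Y : J → C} (F : C ⥤ D) [F.Additive]
    {X : C} {Z : D} (z : Z ⟶ F.obj X) (f : ∀ j, X ⟶ Y j) (hf : ∀ j, z ≫ F.map (f j) = 0) :
    z ≫ F.map (biproduct.lift f) = 0 := by
  have := Fintype.ofFinite J
  classical
  have lift_eq_sum : biproduct.lift f = ∑ j, f j ≫ biproduct.ι Y j :=
    biproduct.hom_ext _ _ fun j => by
      rw [Preadditive.sum_comp, Finset.sum_eq_single j (fun i _ hij => by simp [hij]) (by simp)]
      simp
  rw [lift_eq_sum, F.map_sum, Preadditive.comp_sum]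
  refine Finset.sum_eq_zero fun j _ => ?_
  rw [F.map_comp, ← Category.assoc, hf, zero_comp]

lemma eq_zero_of_translation_eq {A : Type*} [AddCommGroup A] [Module k A] {S : Set G}
    [Infinite (Subgroup.closure S)] {f : G →₀ A} (hf : ∀ s ∈ S, translation k G A s f = f) :
    f = 0 := by
  have h_inv (g : G) (hg : g ∈ Subgroup.closure S) : translation k G A g f = f := by
    induction hg using Subgroup.closure_induction with
    | mem s hs => exact hf s hs
    | one => rw [map_one, Module.End.one_apply]
    | mul a b _ _ ha hb => rw [map_mul, Module.End.mul_apply, hb, ha]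
    | inv a _ ha => nth_rw 1 [← ha, Representation.inv_self_apply]
  ext x
  have orbit_infinite := Set.infinite_range_of_injective fun (a b : Subgroup.closure S)
    (hab : (a * x : G) = b * x) => Subtype.ext (mul_right_cancel hab)
  obtain ⟨_, ⟨g, rfl⟩, hg⟩ := orbit_infinite.exists_notMem_finset f.support
  rw [Finsupp.notMem_support_iff, ← h_inv g g.2, translation_apply, inv_mul_cancel_left] at hg
  exact hg

/-- For `G = NK`, the restriction of `k[G] ⊗ A` to `N` is `k[N] ⊗ (k[K] ⊗ A)`. -/
noncomputable def resRegularIso {N K : Subgroup G} (hc : N.IsComplement' K) (A : ModuleCat.{u} k) :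
    Rep.res N.subtype ((regularFunctor k G).obj A) ≅
      (regularFunctor k N).obj (ModuleCat.of k (K →₀ A)) :=
  Rep.mkIso <| .mk (Finsupp.domLCongr (Equiv.ofBijective _ hc).symm ≪≫ₗ Finsupp.curryLinearEquiv k)
    fun n => LinearMap.ext fun (f : G →₀ A) => Finsupp.ext fun m => Finsupp.ext fun x => by
      change f ((n⁻¹ : G) * (m * x)) = f ((n⁻¹ * m : N) * x)
      rw [Subgroup.coe_mul, Subgroup.coe_inv, mul_assoc]

lemma resAction_comp_resRegularIso_hom {N K : Subgroup G} (hc : N.IsComplement' K)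
    (A : ModuleCat.{u} k) {s : K} (hs : (s : G) ∈ Subgroup.centralizer N) :
    (resAction k hs).app ((regularFunctor k G).obj A) ≫ (resRegularIso hc A).hom =
      (resRegularIso hc A).hom ≫
        (regularFunctor k N).map (ModuleCat.ofHom (translation k K A s)) := by
  refine Rep.hom_ext (DFunLike.ext _ _ fun (f : G →₀ A) => Finsupp.ext (M := K →₀ A) fun n =>
    Finsupp.ext fun x => ?_)
  change f ((s : G)⁻¹ * (n * x)) = f (n * (s⁻¹ * x : K))
  rw [Subgroup.coe_mul, Subgroup.coe_inv, ← mul_assoc, ← mul_assoc,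
    Subgroup.mem_centralizer_iff.1 (inv_mem hs) n n.2]

lemma mono_biproduct_lift_translation_sub_id (A : ModuleCat.{u} k) {S : Finset G}
    [Infinite (Subgroup.closure (S : Set G))] :
    Mono (biproduct.lift fun s : S =>
      ModuleCat.ofHom (translation k G A s) - 𝟙 (ModuleCat.of k (G →₀ A))) := by
  refine (ModuleCat.mono_iff_injective _).2 <| (injective_iff_map_eq_zero _).2 fun f hf =>
    eq_zero_of_translation_eq (k := k) (S := S) fun s hs => ?_
  have hsf := congr_arg (biproduct.π (fun _ : S => ModuleCat.of k (G →₀ A)) ⟨s, hs⟩) hf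
  rw [← ModuleCat.comp_apply, biproduct.lift_π, map_zero] at hsf
  exact sub_eq_zero.1 hsf

theorem RegularVanishing.of_isComplement' {N K : Subgroup G} (hc : N.IsComplement' K)
    (hK : K ≤ Subgroup.centralizer N) (hfg : ∃ H : Subgroup K, H.FG ∧ Infinite H) {n : ℕ}
    (h : RegularVanishing k N n) : RegularVanishing k G (n + 1) := by
  have : N.Normal := Subgroup.normalizer_eq_top_iff.1 <| top_le_iff.1 <|
    hc.sup_eq_top.ge.trans <| sup_le Subgroup.le_normalizer <|
      hK.trans (Subgroup.centralizer_le_normalizer (N : Set G))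
  intro A p hp
  have hres := (h _).of_iso (resRegularIso hc A)
  obtain hp | rfl := Nat.lt_succ_iff_lt_or_eq.1 hp
  · exact hres.of_res N p hp
  obtain ⟨_, ⟨S, rfl⟩, hS⟩ := hfg
  let φ := (functor k G p).map
    ((Rep.resCoindAdjunction k N.subtype).homEquiv _ _ (resRegularIso hc A).hom)
  let F := regularFunctor k N ⋙ Rep.coindFunctor k N.subtype ⋙ functor k G p
  let τ := biproduct.lift fun s : S =>
    ModuleCat.ofHom (translation k K A s) - 𝟙 (ModuleCat.of k (K →₀ A))
  have : Mono φ := hres.mono_functor_map_homEquiv N (resRegularIso hc A)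
  have : Mono τ := mono_biproduct_lift_translation_sub_id A
  have : Mono (F.map τ) := h.mono_functor_map_coind τ
  refine IsZero.of_mono_eq_zero (φ ≫ F.map τ) <|
    comp_map_biproduct_lift_eq_zero F φ _ fun s => ?_
  rw [F.map_sub, F.map_id, Preadditive.comp_sub, Category.comp_id, sub_eq_zero]
  exact functor_map_homEquiv_comp_of_resAction_comp_eq (hK s.1.2)
    (resAction_comp_resRegularIso_hom hc A (hK s.1.2)) p

lemma RegularVanishing.of_mulEquiv {H : Type u} [Group H] (e : G ≃* H) {n : ℕ}
    (h : RegularVanishing k G n) : RegularVanishing k H n := fun A p hp =>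
  (h A p hp).of_iso <| groupCohomology.mapIso (B := (regularFunctor k H).obj A)
    (A := (regularFunctor k G).obj A) e.symm (Finsupp.domLCongr e.symm.toEquiv)
    (fun g => LinearMap.ext fun (f : H →₀ A) => Finsupp.ext fun x => by
      change f (g⁻¹ * e x) = f (e ((e.symm g)⁻¹ * x))
      simp) p

lemma isComplement'_range_inr_range_inl (G H : Type*) [Group G] [Group H] :
    (MonoidHom.inr G H).range.IsComplement' (MonoidHom.inl G H).range := by
  refine Subgroup.isComplement'_of_disjoint_and_mul_eq_univ ?_ ?_
  · rw [Subgroup.disjoint_def]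
    rintro _ ⟨h, rfl⟩ ⟨g, hg⟩
    ext <;> simp_all
  · exact Set.eq_univ_of_forall fun x => Set.mem_mul.2 ⟨_, ⟨x.2, rfl⟩, _, ⟨x.1, rfl⟩, by simp⟩

theorem RegularVanishing.prod {H : Type u} [Group H] {n : ℕ} (h : RegularVanishing k H n)
    (hG : ∃ K : Subgroup G, K.FG ∧ Infinite K) : RegularVanishing k (G × H) (n + 1) := by
  obtain ⟨K, hK, _⟩ := hG
  let eG := MonoidHom.ofInjective (f := MonoidHom.inl G H) (Prod.mk_left_injective 1)
  let eH := MonoidHom.ofInjective (f := MonoidHom.inr G H) (Prod.mk_right_injective 1)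
  have hK_map : (K.map eG.toMonoidHom).FG :=
    (Subgroup.fg_iff_submonoid_fg _).2 (((Subgroup.fg_iff_submonoid_fg _).1 hK).map _)
  refine (h.of_mulEquiv eH).of_isComplement' (isComplement'_range_inr_range_inl G H) ?_
    ⟨K.map eG.toMonoidHom, hK_map, (K.equivMapOfInjective _ eG.injective).infinite_iff.1 ‹_›⟩
  rintro _ ⟨g, rfl⟩
  refine Subgroup.mem_centralizer_iff.2 ?_
  rintro _ ⟨x, rfl⟩
  exact (MonoidHom.commute_inl_inr g x).symm

theorem RegularVanishing.pi {n : ℕ} (G : Fin n → Type u) [∀ i, Group (G i)]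
    (hG : ∀ i, ∃ K : Subgroup (G i), K.FG ∧ Infinite K) : RegularVanishing k (∀ i, G i) n := by
  induction n with
  | zero => exact fun _ p hp => absurd hp p.not_lt_zero
  | succ n ih =>
    let e : G 0 × (∀ i : Fin n, G i.succ) ≃* ∀ i, G i :=
      { Fin.consEquiv G with
        map_mul' _ _ := funext <| Fin.cases rfl fun _ => rfl }
    exact ((ih _ fun i => hG i.succ).prod (hG 0)).of_mulEquiv e

/-- `k[G] ⊗ k` is the left regular representation. -/
noncomputable def regularFunctorObjSelfIso (k G : Type u) [CommRing k] [Group G] :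
    (regularFunctor k G).obj (ModuleCat.of k k) ≅ Rep.ofMulAction k G G :=
  Rep.mkIso <| .mk (MonoidAlgebra.coeffLinearEquiv k).symm fun g => by
    ext
    simp [translation]

end RegularVanishing

section FinitelyGenerated

lemma mem_torsionOf_asModule_iff {k G V : Type*} [CommRing k] [Monoid G] [AddCommGroup V]
    [Module k V] (ρ : Representation k G V) (v : V) (r : MonoidAlgebra k G) :
    r ∈ Ideal.torsionOf (MonoidAlgebra k G) ρ.asModule (ρ.asModuleEquiv.symm v) ↔
      ρ.asAlgebraHom r v = 0 := by
  rw [Ideal.mem_torsionOf_iff, ← ρ.asModuleEquiv.map_eq_zero_iff,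
    Representation.asModuleEquiv_map_smul, LinearEquiv.apply_symm_apply]

variable (k G : Type*) [CommRing k] [Group G]

/-- The augmentation ideal of `k[G]`. -/
noncomputable abbrev augmentationIdeal : Ideal (MonoidAlgebra k G) :=
  Ideal.span (Set.range fun g : G => MonoidAlgebra.of k G g - 1)

lemma exists_sub_single_mem_augmentationIdeal (r : MonoidAlgebra k G) :
    ∃ c : k, r - .single 1 c ∈ augmentationIdeal k G := by
  induction r using MonoidAlgebra.induction_on with
  | of g => exact ⟨1, Submodule.subset_span ⟨g, rfl⟩⟩
  | add x y hx hy =>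
    obtain ⟨c, hc⟩ := hx
    obtain ⟨d, hd⟩ := hy
    refine ⟨c + d, ?_⟩
    rw [MonoidAlgebra.single_add, add_sub_add_comm]
    exact add_mem hc hd
  | smul a x hx =>
    obtain ⟨c, hc⟩ := hx
    refine ⟨a * c, ?_⟩
    have := Submodule.smul_of_tower_mem _ a hc
    rwa [smul_sub, MonoidAlgebra.smul_single, smul_eq_mul] at this

lemma torsionOf_trivial_one :
    Ideal.torsionOf (MonoidAlgebra k G) (Representation.trivial k G k).asModule
      ((Representation.trivial k G k).asModuleEquiv.symm 1) = augmentationIdeal k G := by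
  have hle : augmentationIdeal k G ≤ Ideal.torsionOf _ _
      ((Representation.trivial k G k).asModuleEquiv.symm 1) := by
    rw [Ideal.span_le]
    rintro _ ⟨g, rfl⟩
    rw [SetLike.mem_coe, mem_torsionOf_asModule_iff]
    simp
  refine le_antisymm (fun r hr => ?_) hle
  obtain ⟨c, hc⟩ := exists_sub_single_mem_augmentationIdeal k G r
  have hc0 := sub_mem hr (hle hc)
  rw [sub_sub_cancel, mem_torsionOf_asModule_iff] at hc0
  obtain rfl : c = 0 := by simpa using hc0
  simpa using hc

lemma toSpanSingleton_trivial_one_surjective : Function.Surjective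
    (LinearMap.toSpanSingleton (MonoidAlgebra k G) (Representation.trivial k G k).asModule
      ((Representation.trivial k G k).asModuleEquiv.symm 1)) := fun x =>
  let e := (Representation.trivial k G k).asModuleEquiv
  ⟨.single 1 (e x), e.injective <| by
    rw [LinearMap.toSpanSingleton_apply, Representation.asModuleEquiv_map_smul,
      LinearEquiv.apply_symm_apply]
    simp⟩

lemma augmentationIdeal_fg_of_finitePresentation_trivial
    [Module.FinitePresentation (MonoidAlgebra k G) (Representation.trivial k G k).asModule] :
    (augmentationIdeal k G).FG :=
  torsionOf_trivial_one k G ▸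
    Module.FinitePresentation.fg_ker _ (toSpanSingleton_trivial_one_surjective k G)

lemma of_sub_one_mem_torsionOf_quotient_iff [Nontrivial k] (H : Subgroup G) (g : G) :
    MonoidAlgebra.of k G g - 1 ∈ Ideal.torsionOf (MonoidAlgebra k G)
      (Representation.ofMulAction k G (G ⧸ H)).asModule
      ((Representation.ofMulAction k G (G ⧸ H)).asModuleEquiv.symm (.single ((1 : G) : G ⧸ H) 1)) ↔
      g ∈ H := by
  have hg : (g : G ⧸ H) = ((1 : G) : G ⧸ H) ↔ g ∈ H := by
    rw [eq_comm, QuotientGroup.eq, inv_one, one_mul]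
  rw [mem_torsionOf_asModule_iff, ← hg]
  simp [sub_eq_zero, MonoidAlgebra.single_left_inj]

/- If the `t - 1` with `t ∈ T` generate the augmentation ideal, then every `g - 1` kills the base
point of `k[G ⧸ closure T]`, since the `t - 1` do. -/
theorem group_fg_of_augmentationIdeal_fg [Nontrivial k] (h : (augmentationIdeal k G).FG) :
    Group.FG G := by
  classical
  obtain ⟨s, hs, hspan⟩ := (Submodule.fg_span_iff_fg_span_finset_subset _).1 h
  rw [← Set.image_univ, Finset.subset_set_image_iff] at hs
  obtain ⟨T, -, rfl⟩ := hs
  refine ⟨T, eq_top_iff.2 fun g _ => ?_⟩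
  rw [← of_sub_one_mem_torsionOf_quotient_iff k]
  refine (?_ : augmentationIdeal k G ≤ _) (Submodule.subset_span ⟨g, rfl⟩)
  rw [augmentationIdeal, Ideal.span, hspan, Submodule.span_le]
  intro x hx
  obtain ⟨t, ht, rfl⟩ := Finset.mem_image.1 hx
  exact (of_sub_one_mem_torsionOf_quotient_iff k G _ t).2 (Subgroup.subset_closure ht)

namespace IsFPInfinity

variable {G : Type} [Group G]

theorem finitePresentation_trivial (h : IsFPInfinity G) :
    Module.FinitePresentation (MonoidAlgebra ℤ G) (Representation.trivial ℤ G ℤ).asModule := by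
  obtain ⟨P, h⟩ := h
  let F : Rep ℤ G ⥤ ModuleCat (MonoidAlgebra ℤ G) := Rep.equivalenceModuleMonoidAlgebra.functor
  have hex := P.exact₀.map F
  rw [ShortComplex.moduleCat_exact_iff_range_eq_ker] at hex
  have h₀ := h 0
  have h₁ := h 1
  have : Module.Projective (MonoidAlgebra ℤ G) (F.obj (P.complex.X 0)) :=
    (IsProjective.iff_projective _).2
      ((Rep.equivalenceModuleMonoidAlgebra.map_projective_iff _).2 (P.projective 0))
  have : Module.FinitePresentation (MonoidAlgebra ℤ G) (F.obj (P.complex.X 0)) :=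
    Module.finitePresentation_of_projective ..
  refine Module.finitePresentation_of_surjective (M := F.obj (P.complex.X 0))
    (F.map (P.π.f 0)).hom ((ModuleCat.epi_iff_surjective _).1 inferInstance) (hex ▸ ?_)
  exact Module.Finite.iff_fg.1 (Module.Finite.range (F.map (P.complex.d 1 0)).hom)

theorem group_fg (h : IsFPInfinity G) : Group.FG G :=
  have := h.finitePresentation_trivial
  group_fg_of_augmentationIdeal_fg ℤ G (augmentationIdeal_fg_of_finitePresentation_trivial ℤ G)

end IsFPInfinity

end FinitelyGenerated

theorem stmt_10_general {k : Type u} [CommRing k] {n : ℕ} (G : Fin n → Type u) [∀ i, Group (G i)]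
    (hG : ∀ i, ∃ H : Subgroup (G i), H.FG ∧ Infinite H) {p : ℕ} (hp : p < n) :
    Subsingleton (groupCohomology (Rep.ofMulAction k (∀ i, G i) (∀ i, G i)) p) :=
  ModuleCat.isZero_iff_subsingleton.1 <| (RegularVanishing.pi G hG (.of k k)).of_iso
    (regularFunctorObjSelfIso k _).symm p hp

/-- If `G = G₁ × ⋯ × G_n` is a product of `n ≥ 1` infinite groups of type `FP∞`,
then `H^p(G, ℤ[G]) = 0` for all `p ≤ n - 1`. -/
theorem stmt_10 (n : ℕ) (hn : 1 ≤ n) (G : Fin n → Type)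
    [inst : ∀ i, Group (G i)] [∀ i, Infinite (G i)]
    (hFP : ∀ i, IsFPInfinity (G i)) :
    ∀ p : ℕ, p ≤ n - 1 →
      Subsingleton (groupCohomology
        (Rep.ofMulAction ℤ (∀ i, G i) (∀ i, G i)) p) := by
  exact fun _ hp => stmt_10_general G
    (fun i => ⟨⊤, (hFP i).group_fg.out, Subgroup.topEquiv.infinite_iff.2 inferInstance⟩) (by omega)
end

section
/- Group cohomology of a group G of type FP∞ commutes with direct limits (filtered colimits) in the coefficient module: H^n(G, colim_i M_i) ≅ colim_i H^n(G, M_i) for every filtered system of ℤ[G]-modules M_i and every n. -/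
open CategoryTheory CategoryTheory.Limits

/-- The functor `M ↦ Hⁿ(G, M)` on coefficient modules, realized as
`Extⁿ_{ℤ[G]}(ℤ, -)`; it agrees with `groupCohomology` by `groupCohomologyIsoExt`. -/
noncomputable def cohomologyFunctor (G : Type) [Group G] (n : ℕ) :
    Rep ℤ G ⥤ ModuleCat ℤ :=
  (Ext ℤ (Rep ℤ G) n).obj (Opposite.op (Rep.trivial ℤ G ℤ))

/-!
Let `P` be a projective resolution of `X` with finitely presentable terms. Finite presentability
says exactly that each `Hom(Pᵢ, -)` commutes with filtered colimits, so the cochain complex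
`Hom(P, -)` does. Filtered colimits of modules are exact, so taking cohomology commutes with them
too, and `Extⁿ(X, -)` is the `n`-th cohomology of `Hom(P, -)`. Only the terms of `P` in the degrees
`n - 1`, `n` and `n + 1` matter.
-/

open Opposite

universe v u

section FinitelyPresentable

attribute [local instance] Cardinal.fact_isRegular_aleph0

variable {R : Type u} [Ring R]

theorem isFinitelyPresentable_free_of_finite (X : Type u) [Finite X] :
    IsFinitelyPresentable.{u} ((ModuleCat.free R).obj X) := by
  have : IsCardinalPresentable X Cardinal.aleph0.{u} :=
    (hasCardinalLT_of_finite X _ le_rfl).isCardinalPresentable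
  have : (forget (ModuleCat.{u} R)).IsCardinalAccessible Cardinal.aleph0.{u} :=
    Functor.isFinitelyAccessible_iff_preservesFilteredColimits.2 inferInstance
  exact (ModuleCat.adj R).isCardinalPresentable_leftAdjoint_obj _ X

theorem isFinitelyPresentable_of_finite_of_projective (M : ModuleCat.{u} R)
    [Module.Finite R M] [Module.Projective R M] : IsFinitelyPresentable.{u} M := by
  obtain ⟨n, f, g, -, -, hfg⟩ := Module.Finite.exists_comp_eq_id_of_projective R M
  have := isFinitelyPresentable_free_of_finite (R := R) (ULift.{u} (Fin n))
  let e : (ULift.{u} (Fin n) →₀ R) ≃ₗ[R] (Fin n → R) :=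
    (Finsupp.domLCongr Equiv.ulift).trans (Finsupp.linearEquivFunOnFinite R R (Fin n))
  let retract : Retract M ((ModuleCat.free R).obj (ULift.{u} (Fin n))) :=
    { i := ModuleCat.ofHom (e.symm.toLinearMap ∘ₗ g)
      r := ModuleCat.ofHom (f ∘ₗ e.toLinearMap)
      retract := by
        ext x
        simpa using! LinearMap.congr_fun hfg x }
  exact retract.isCardinalPresentable _

theorem isFinitelyPresentable_rep_of_finite_of_projective {k G : Type u} [CommRing k] [Group G]
    (A : Rep.{u} k G) [Projective A]
    [Module.Finite (MonoidAlgebra k G) (Rep.equivalenceModuleMonoidAlgebra.functor.obj A)] :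
    IsFinitelyPresentable.{u} A := by
  let E := Rep.equivalenceModuleMonoidAlgebra (k := k) (G := G)
  have : Module.Projective (MonoidAlgebra k G) (E.functor.obj A) :=
    (IsProjective.iff_projective _).2 ((E.map_projective_iff A).2 inferInstance)
  exact (isCardinalPresentable_iff_of_isEquivalence A Cardinal.aleph0.{u} E.functor).1
    (isFinitelyPresentable_of_finite_of_projective _)

end FinitelyPresentable

section HomologyColimit

variable {D : Type*} [Category* D] {J : Type*} [Category* J]

/-- The homology of a short complex of functors is computed pointwise. -/
noncomputable def functorEquivalenceCompHomologyIso [Abelian D] (S : ShortComplex (J ⥤ D)) :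
    (ShortComplex.FunctorEquivalence.functor J D).obj S ⋙ ShortComplex.homologyFunctor D ≅
      S.homology :=
  NatIso.ofComponents (fun j => S.mapHomologyIso ((evaluation J D).obj j)) fun f =>
    (Iso.inv_comp_eq _).1 (NatTrans.app_homology ((evaluation J D).map f) S).symm

variable [HasColimitsOfShape J D]

/-- The degreewise colimit of a short complex `S` of functors `J ⥤ D`, as a cocone over the
corresponding `J`-diagram of short complexes in `D`. -/
noncomputable def mapColimCocone [HasZeroMorphisms D] (S : ShortComplex (J ⥤ D)) :
    Cocone ((ShortComplex.FunctorEquivalence.functor J D).obj S) where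
  pt := S.map colim
  ι :=
    { app j := S.mapNatTrans (colim.ι j)
      naturality _ _ f := ShortComplex.hom_ext _ _
        ((colimit.w S.X₁ f).trans (Category.comp_id _).symm)
        ((colimit.w S.X₂ f).trans (Category.comp_id _).symm)
        ((colimit.w S.X₃ f).trans (Category.comp_id _).symm) }

/-- Colimits of short complexes are computed degreewise. -/
noncomputable def isColimitMapColimCocone [HasZeroMorphisms D] (S : ShortComplex (J ⥤ D)) :
    IsColimit (mapColimCocone S) :=
  ShortComplex.isColimitOfIsColimitπ _
    (colimit.isColimit S.X₁) (colimit.isColimit S.X₂) (colimit.isColimit S.X₃)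

variable [Abelian D] [HasExactColimitsOfShape J D]

/-- As `colim` is exact, `colim S.homology` is the homology of `S.map colim`. -/
noncomputable def isColimitHomologyMapColimCocone (S : ShortComplex (J ⥤ D)) :
    IsColimit ((ShortComplex.homologyFunctor D).mapCocone (mapColimCocone S)) :=
  (IsColimit.equivOfNatIsoOfIso (functorEquivalenceCompHomologyIso S)
    ((ShortComplex.homologyFunctor D).mapCocone (mapColimCocone S)) (colimit.cocone S.homology)
    (Cocone.ext (S.mapHomologyIso colim) fun j =>
      (Category.assoc _ _ _).trans (NatTrans.app_homology (colim.ι j) S).symm)).symm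
    (colimit.isColimit S.homology)

instance preservesColimitsOfShape_homologyFunctor :
    PreservesColimitsOfShape J (ShortComplex.homologyFunctor D) where
  preservesColimit {F} :=
    have : PreservesColimit ((ShortComplex.FunctorEquivalence.inverse J D ⋙
        ShortComplex.FunctorEquivalence.functor J D).obj F) (ShortComplex.homologyFunctor D) :=
      preservesColimit_of_preserves_colimit_cocone (isColimitMapColimCocone _)
        (isColimitHomologyMapColimCocone _)
    preservesColimit_of_iso_diagram _ ((ShortComplex.FunctorEquivalence.counitIso J D).app F)

theorem preservesColimitsOfShape_comp_homologyFunctor {C : Type*} [Category* C] {ι : Type*}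
    {c : ComplexShape ι} (K : C ⥤ HomologicalComplex D c) (i : ι)
    [PreservesColimitsOfShape J (K ⋙ HomologicalComplex.eval D c (c.prev i))]
    [PreservesColimitsOfShape J (K ⋙ HomologicalComplex.eval D c i)]
    [PreservesColimitsOfShape J (K ⋙ HomologicalComplex.eval D c (c.next i))] :
    PreservesColimitsOfShape J (K ⋙ HomologicalComplex.homologyFunctor D c i) := by
  have : PreservesColimitsOfShape J (K ⋙ HomologicalComplex.shortComplexFunctor D c i) :=
    { preservesColimit := ⟨fun hs => ⟨ShortComplex.isColimitOfIsColimitπ _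
        (isColimitOfPreserves (K ⋙ HomologicalComplex.eval D c (c.prev i)) hs)
        (isColimitOfPreserves (K ⋙ HomologicalComplex.eval D c i) hs)
        (isColimitOfPreserves (K ⋙ HomologicalComplex.eval D c (c.next i)) hs)⟩⟩ }
  exact inferInstanceAs (PreservesColimitsOfShape J
    ((K ⋙ HomologicalComplex.shortComplexFunctor D c i) ⋙ ShortComplex.homologyFunctor D))

end HomologyColimit

section HomComplex

variable {C : Type*} [Category* C]

/-- The functor sending `Y` to the cochain complex `Hom(K, Y)`, which is `K.linearYonedaObj R Y`
when `C` is abelian. -/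
noncomputable def homComplexFunctor (R : Type*) [Ring R] [Preadditive C] [Linear R C]
    {α : Type*} [AddRightCancelSemigroup α] [One α] (K : ChainComplex C α) :
    C ⥤ CochainComplex (ModuleCat R) α where
  obj Y := ((((linearYoneda R C).obj Y).rightOp.mapHomologicalComplex _).obj K).unop
  map f :=
    { f i := ((linearYoneda R C).map f).app (op (K.X i))
      comm' i j _ := (((linearYoneda R C).map f).naturality (K.d j i).op).symm }

variable {R : Type*} [Ring R] [Abelian C] [Linear R C] [EnoughProjectives C] {X : C}

theorem isoExt_hom_naturality (P : ProjectiveResolution X) (n : ℕ) {Y Z : C} (f : Y ⟶ Z) :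
    ((Ext R C n).obj (op X)).map f ≫ (P.isoExt n Z).hom =
      (P.isoExt n Y).hom ≫
        HomologicalComplex.homologyMap ((homComplexFunctor R P.complex).map f) n := by
  let K (W : C) := (((linearYoneda R C).obj W).rightOp.mapHomologicalComplex
    (ComplexShape.down ℕ)).obj P.complex
  let τ := NatTrans.rightOp ((linearYoneda R C).map f)
  let φ : K Z ⟶ K Y := (NatTrans.mapHomologicalComplex τ _).app P.complex
  let ψ : (K Y).unop ⟶ (K Z).unop := (homComplexFunctor R P.complex).map f
  let e (W : C) : (((linearYoneda R C).obj W).rightOp.leftDerived n).obj X ≅ (K W).homology n :=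
    P.isoLeftDerivedObj ((linearYoneda R C).obj W).rightOp n
  let o (W : C) : (K W).homology n ≅ op ((K W).unop.homology n) := (K W).unop.homologyOp n
  have he : (NatTrans.leftDerived τ n).app X =
      (e Z).hom ≫ HomologicalComplex.homologyMap φ n ≫ (e Y).inv := P.leftDerived_app_eq τ n
  have ho : HomologicalComplex.homologyMap φ n ≫ (o Y).hom =
      (o Z).hom ≫ (HomologicalComplex.homologyMap ψ n).op :=
    HomologicalComplex.homologyOp_hom_naturality ψ n
  have h : ((o Z).inv ≫ (e Z).inv) ≫ (NatTrans.leftDerived τ n).app X =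
      (HomologicalComplex.homologyMap ψ n).op ≫ (o Y).inv ≫ (e Y).inv := by
    rw [he, Category.assoc, Iso.inv_hom_id_assoc, Iso.inv_comp_eq, ← reassoc_of% ho,
      Iso.hom_inv_id_assoc]
  exact congrArg Quiver.Hom.unop h

/-- `Extⁿ(X, -)` is computed, naturally in the second variable, by a projective resolution
of `X`. -/
noncomputable def extIsoHomComplexFunctorCompHomology (P : ProjectiveResolution X) (n : ℕ) :
    (Ext R C n).obj (op X) ≅
      homComplexFunctor R P.complex ⋙ HomologicalComplex.homologyFunctor _ _ n :=
  NatIso.ofComponents (P.isoExt n) (isoExt_hom_naturality P n)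

end HomComplex

section FilteredColimit

variable {R : Type v} [Ring R] {C : Type u} [Category.{v} C]
  {J : Type v} [SmallCategory J] [IsFiltered J]

instance preservesColimitsOfShape_linearCoyoneda_obj [Preadditive C] [Linear R C] (X : C)
    [IsFinitelyPresentable.{v} X] :
    PreservesColimitsOfShape J ((linearCoyoneda R C).obj (op X)) := by
  have : PreservesColimitsOfShape J
      ((linearCoyoneda R C).obj (op X) ⋙ forget (ModuleCat.{v} R)) :=
    inferInstanceAs (PreservesColimitsOfShape J (coyoneda.obj (op X)))
  have : ReflectsColimitsOfShape J (forget (ModuleCat.{v} R)) :=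
    reflectsColimitsOfShape_of_reflectsIsomorphisms
  exact preservesColimitsOfShape_of_reflects_of_preserves _ (forget (ModuleCat.{v} R))

instance preservesColimitsOfShape_homComplexFunctor_comp_eval [Preadditive C] [Linear R C]
    {α : Type*} [AddRightCancelSemigroup α] [One α] (K : ChainComplex C α) (i : α)
    [IsFinitelyPresentable.{v} (K.X i)] :
    PreservesColimitsOfShape J (homComplexFunctor R K ⋙ HomologicalComplex.eval _ _ i) :=
  inferInstanceAs (PreservesColimitsOfShape J ((linearCoyoneda R C).obj (op (K.X i))))

theorem preservesColimitsOfShape_ext_obj [Abelian C] [Linear R C] [EnoughProjectives C] {X : C}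
    (P : ProjectiveResolution X) (n : ℕ)
    (hP : ∀ i ≤ n + 1, IsFinitelyPresentable.{v} (P.complex.X i)) :
    PreservesColimitsOfShape J ((Ext R C n).obj (op X)) := by
  have := hP ((ComplexShape.up ℕ).prev n) (by cases n <;> simp; lia)
  have := hP n (by simp)
  have := hP ((ComplexShape.up ℕ).next n) (by simp)
  have := preservesColimitsOfShape_comp_homologyFunctor (J := J) (homComplexFunctor R P.complex) n
  exact preservesColimitsOfShape_of_natIso (extIsoHomComplexFunctorCompHomology P n).symm

end FilteredColimit

theorem stmt_11_general {k G : Type u} [CommRing k] [Group G] (n : ℕ)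
    (P : ProjectiveResolution (Rep.trivial k G k))
    (hP : ∀ i ≤ n + 1, Module.Finite (MonoidAlgebra k G)
      (Rep.equivalenceModuleMonoidAlgebra.functor.obj (P.complex.X i)))
    {J : Type u} [SmallCategory J] [IsFiltered J] (F : J ⥤ Rep.{u} k G) :
    Nonempty (groupCohomology (colimit F) n ≅
      colimit (F ⋙ (Ext k (Rep k G) n).obj (op (Rep.trivial k G k)))) := by
  have : PreservesColimitsOfShape J ((Ext k (Rep k G) n).obj (op (Rep.trivial k G k))) :=
    preservesColimitsOfShape_ext_obj P n fun i hi =>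
      have := hP i hi
      isFinitelyPresentable_rep_of_finite_of_projective (P.complex.X i)
  exact ⟨groupCohomologyIsoExt (colimit F) n ≪≫ preservesColimitIso _ F⟩

instance subsingleton_linear_int (C : Type*) [Category* C] [Preadditive C] :
    Subsingleton (Linear ℤ C) where
  allEq := by
    rintro ⟨h, _, _⟩ ⟨h', _, _⟩
    obtain rfl : h = h' := by ext X Y : 2; exact Subsingleton.elim _ _
    rfl

/-- `cohomologyFunctor` is formed with the `ℤ`-linear structure that every preadditive category
carries, which is not definitionally the one of `Rep ℤ G`. -/
theorem cohomologyFunctor_eq_ext (G : Type) [Group G] (n : ℕ) :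
    cohomologyFunctor G n =
      (@Ext ℤ _ (Rep ℤ G) _ _ Rep.instLinear _ n).obj (op (Rep.trivial ℤ G ℤ)) := by
  rw [cohomologyFunctor,
    Subsingleton.elim (Linear.preadditiveIntLinear (C := Rep ℤ G)) Rep.instLinear]

/-- Group cohomology of a group of type `FP∞` commutes with filtered colimits in the
coefficient module: for every filtered system `F` of `ℤ[G]`-modules,
`Hⁿ(G, colim F) ≅ colim Hⁿ(G, F)`. -/
theorem stmt_11 (G : Type) [Group G] (hFP : IsFPInfinity G)
    (J : Type) [SmallCategory J] [IsFiltered J] (F : J ⥤ Rep ℤ G) (n : ℕ) :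
    Nonempty (groupCohomology (colimit F) n ≅ colimit (F ⋙ cohomologyFunctor G n)) := by
  obtain ⟨P, hP⟩ := hFP
  rw [cohomologyFunctor_eq_ext]
  exact stmt_11_general n P (fun i _ => hP i) F
end
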